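/- The series ∑_{d odd} μ²(d)/(d·√(e₂(d))) converges, where the sum ranges over odd positive integers d, μ is the Möbius function, and e₂(d) denotes the multiplicative order of 2 modulo d. Equivalently, the sum of 1/(d·√(ord_d(2))) over odd squarefree d ≥ 1 is finite. -/

import Mathlib

open ArithmeticFunction

/-!
The terms are grouped dyadically by the order `e` of `2` modulo `d`. If `2 ^ j ≤ e < 2 ^ (j + 1)`,
then `d` divides `P = ∏_{1 ≤ k ≤ 2 ^ (j + 1)} (2 ^ k - 1)`, and `P ≤ 2 ^ (4 ^ (j + 1))` has at most
`4 ^ (j + 1)` prime factors. Hence the sum of `1 / d` over the squarefree `d` in the group is at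
most `∏_{p ∣ P} (1 + 1 / p) ≤ exp (∑_{p ∣ P} 1 / p)` (`sum_inv_le_prod`).

Any `4 ^ M` primes have reciprocal sum at most `4 (1 + log (2 M)) + 1`
(`sum_inv_primes_le`): those that are at least `4 ^ M` contribute at most `1` in total, and those
in `[2 ^ k, 2 ^ (k + 1))` contribute at most `4 / k`, by Chebyshev's bound `∏_{p ≤ n} p ≤ 4 ^ n`
(`sum_inv_block_le`).
So the `j`-th group contributes at most a constant times `(j + 1) ^ 4 / √(2 ^ j)`, which is
summable in `j`.
-/

/-- Primes in a dyadic block `[2 ^ k, 2 ^ (k + 1))` have reciprocal sum at most `4 / k`. -/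
lemma sum_inv_block_le (S : Finset ℕ) (k : ℕ) (hk : 1 ≤ k)
    (hS : ∀ p ∈ S, p.Prime ∧ 2 ^ k ≤ p ∧ p < 2 ^ (k + 1)) :
    ∑ p ∈ S, (1 / p : ℝ) ≤ 4 / k := by
  have hcard : k * S.card ≤ 2 ^ (k + 2) := by
    have h1 : (2 ^ k) ^ S.card ≤ ∏ p ∈ S, p :=
      Finset.pow_card_le_prod S (fun p => p) (2 ^ k) fun p hp => (hS p hp).2.1
    have h2 : ∏ p ∈ S, p ≤ primorial (2 ^ (k + 1)) := by
      unfold primorial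
      refine Finset.prod_le_prod_of_subset_of_one_le' ?_ ?_
      · intro p hp
        obtain ⟨h, -, h'⟩ := hS p hp
        simp only [Finset.mem_filter, Finset.mem_range]
        exact ⟨by omega, h⟩
      · intro p hp _
        exact (Finset.mem_filter.1 hp).2.one_le
    have h3 := (h1.trans h2).trans (primorial_le_four_pow _)
    rw [← pow_mul, show (4 : ℕ) = 2 ^ 2 by norm_num, ← pow_mul] at h3
    have h4 := (Nat.pow_le_pow_iff_right (by norm_num)).1 h3
    calc k * S.card ≤ 2 * 2 ^ (k + 1) := h4
      _ = 2 ^ (k + 2) := by ring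
  have hk0 : (0 : ℝ) < k := by exact_mod_cast hk
  calc ∑ p ∈ S, (1 / p : ℝ) ≤ ∑ p ∈ S, (1 / 2 ^ k : ℝ) := by
        refine Finset.sum_le_sum fun p hp => ?_
        have : (2 ^ k : ℝ) ≤ p := by exact_mod_cast (hS p hp).2.1
        gcongr
    _ = S.card / 2 ^ k := by rw [Finset.sum_const, nsmul_eq_mul]; ring
    _ ≤ 4 / k := by
        rw [div_le_div_iff₀ (by positivity) hk0]
        have : (k * S.card : ℝ) ≤ 2 ^ (k + 2) := by exact_mod_cast hcard
        rw [pow_add] at this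
        linarith

/-- A set of at most `4 ^ M` primes has reciprocal sum `O(log M)`. -/
lemma sum_inv_primes_le (S : Finset ℕ) (M : ℕ) (hS : ∀ p ∈ S, p.Prime)
    (hcard : S.card ≤ 4 ^ M) :
    ∑ p ∈ S, (1 / p : ℝ) ≤ 4 * (1 + Real.log (2 * M)) + 1 := by
  rw [← Finset.sum_filter_add_sum_filter_not S (fun p => p < 4 ^ M)]
  have hfour : (4 : ℕ) ^ M = 2 ^ (2 * M) := by rw [pow_mul]; norm_num
  gcongr
  · have hmaps : ∀ p ∈ S.filter (fun p => p < 4 ^ M), Nat.log 2 p ∈ Finset.Icc 1 (2 * M) := by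
      intro p hp
      obtain ⟨hpS, hlt⟩ := Finset.mem_filter.1 hp
      rw [Finset.mem_Icc]
      refine ⟨Nat.log_pos (by norm_num) (hS p hpS).two_le, ?_⟩
      rw [hfour] at hlt
      exact (Nat.log_lt_of_lt_pow (hS p hpS).ne_zero hlt).le
    rw [← Finset.sum_fiberwise_of_maps_to hmaps]
    calc _ ≤ ∑ k ∈ Finset.Icc 1 (2 * M), (4 / k : ℝ) := by
          refine Finset.sum_le_sum fun k hk => ?_
          refine sum_inv_block_le _ k (Finset.mem_Icc.1 hk).1 fun p hp => ?_
          simp only [Finset.mem_filter] at hp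
          obtain ⟨⟨hpS, -⟩, rfl⟩ := hp
          exact ⟨hS p hpS, Nat.pow_log_le_self 2 (hS p hpS).ne_zero,
            Nat.lt_pow_succ_log_self (by norm_num) p⟩
      _ = 4 * (harmonic (2 * M) : ℝ) := by
          rw [harmonic_eq_sum_Icc]
          push_cast
          rw [Finset.mul_sum]
          rfl
      _ ≤ _ := by
          have := harmonic_le_one_add_log (2 * M)
          push_cast at this
          linarith
  · calc _ ≤ ∑ p ∈ S.filter (fun p => ¬ p < 4 ^ M), (1 / 4 ^ M : ℝ) := by
          refine Finset.sum_le_sum fun p hp => ?_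
          have : (4 ^ M : ℝ) ≤ p := by
            exact_mod_cast not_lt.1 (Finset.mem_filter.1 hp).2
          gcongr
      _ ≤ 1 := by
          rw [Finset.sum_const, nsmul_eq_mul, mul_one_div, div_le_one (by positivity)]
          exact_mod_cast (Finset.card_filter_le _ _).trans hcard

/-- Squarefree integers are determined by their sets of prime factors, so the expansion of
`∏_{p ∈ S} (1 + 1 / p)` contains each `1 / d` at most once. -/
lemma sum_inv_le_prod (T S : Finset ℕ) (hT : ∀ d ∈ T, Squarefree d ∧ d.primeFactors ⊆ S) :
    ∑ d ∈ T, (1 / d : ℝ) ≤ ∏ p ∈ S, (1 + 1 / p : ℝ) := by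
  rw [Finset.prod_one_add]
  have hinj : Set.InjOn Nat.primeFactors (T : Set ℕ) := by
    intro a ha b hb hab
    rw [← Nat.prod_primeFactors_of_squarefree (hT a ha).1,
      ← Nat.prod_primeFactors_of_squarefree (hT b hb).1, hab]
  calc ∑ d ∈ T, (1 / d : ℝ) = ∑ d ∈ T, ∏ p ∈ d.primeFactors, (1 / p : ℝ) := by
        refine Finset.sum_congr rfl fun d hd => ?_
        conv_lhs => rw [← Nat.prod_primeFactors_of_squarefree (hT d hd).1]
        simp
    _ = ∑ A ∈ T.image Nat.primeFactors, ∏ p ∈ A, (1 / p : ℝ) := by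
        rw [Finset.sum_image hinj]
    _ ≤ _ := by
        refine Finset.sum_le_sum_of_subset_of_nonneg ?_ fun A _ _ =>
          Finset.prod_nonneg fun p _ => by positivity
        intro A hA
        obtain ⟨d, hd, rfl⟩ := Finset.mem_image.1 hA
        exact Finset.mem_powerset.2 (hT d hd).2

/-- `P = ∏_{1 ≤ k ≤ 2 ^ M} (2 ^ k - 1)` satisfies `P ≤ 2 ^ (4 ^ M)`, which bounds the number of
its prime factors. -/
lemma card_primeFactors_prod_le (M : ℕ) :
    (∏ k ∈ Finset.Icc 1 (2 ^ M), (2 ^ k - 1)).primeFactors.card ≤ 4 ^ M := by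
  set P := ∏ k ∈ Finset.Icc 1 (2 ^ M), (2 ^ k - 1) with hP
  have hP0 : P ≠ 0 := Finset.prod_ne_zero_iff.2 fun k hk => by
    have := Nat.one_lt_two_pow (n := k) (by have := (Finset.mem_Icc.1 hk).1; omega)
    omega
  have h1 : 2 ^ P.primeFactors.card ≤ ∏ p ∈ P.primeFactors, p :=
    Finset.pow_card_le_prod _ (fun p => p) 2 fun p hp => (Nat.prime_of_mem_primeFactors hp).two_le
  have h2 : ∏ p ∈ P.primeFactors, p ≤ P :=
    Nat.le_of_dvd (Nat.pos_of_ne_zero hP0) (Nat.prod_primeFactors_dvd P)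
  have h3 : P ≤ (2 ^ 2 ^ M) ^ (Finset.Icc 1 (2 ^ M)).card :=
    Finset.prod_le_pow_card _ _ _ fun k hk =>
      (Nat.sub_le _ _).trans (Nat.pow_le_pow_right (by norm_num) (Finset.mem_Icc.1 hk).2)
  have h4 := (h1.trans h2).trans h3
  rw [Nat.card_Icc, Nat.add_sub_cancel, ← pow_mul, ← mul_pow] at h4
  exact (Nat.pow_le_pow_iff_right (by norm_num)).1 h4

lemma orderOf_two_pos {d : ℕ} (hd : Odd d) : 0 < orderOf (2 : ZMod d) := by
  have : NeZero d := ⟨hd.pos.ne'⟩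
  have hu : IsUnit ((2 : ℕ) : ZMod d) := (ZMod.isUnit_iff_coprime 2 d).2 hd.coprime_two_left
  obtain ⟨u, hu⟩ := hu
  have h : (2 : ZMod d) = (u : ZMod d) := by rw [hu]; norm_num
  rw [h, orderOf_units]
  exact orderOf_pos u

/-- The reciprocals of odd squarefree `d` for which `2` has order at most `2 ^ M`
sum to `O(M ^ 4)`. -/
lemma sum_inv_order_le (T : Finset ℕ) (M : ℕ) (hM : 1 ≤ M)
    (hT : ∀ d ∈ T, Odd d ∧ Squarefree d ∧ orderOf (2 : ZMod d) ≤ 2 ^ M) :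
    ∑ d ∈ T, (1 / d : ℝ) ≤ Real.exp 5 * (2 * M) ^ 4 := by
  set P := ∏ k ∈ Finset.Icc 1 (2 ^ M), (2 ^ k - 1) with hP
  have hP0 : P ≠ 0 := Finset.prod_ne_zero_iff.2 fun k hk => by
    have := Nat.one_lt_two_pow (n := k) (by have := (Finset.mem_Icc.1 hk).1; omega)
    omega
  have hM0 : (0 : ℝ) < 2 * M := by
    have : (0 : ℝ) < M := by exact_mod_cast hM
    linarith
  calc ∑ d ∈ T, (1 / d : ℝ) ≤ ∏ p ∈ P.primeFactors, (1 + 1 / p : ℝ) := by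
        refine sum_inv_le_prod _ _ fun d hd => ?_
        obtain ⟨hodd, hsq, hord⟩ := hT d hd
        refine ⟨hsq, Nat.primeFactors_mono ?_ hP0⟩
        have hdvd : d ∣ 2 ^ orderOf (2 : ZMod d) - 1 := by
          rw [← ZMod.natCast_eq_zero_iff, Nat.cast_sub Nat.one_le_two_pow]
          push_cast
          rw [pow_orderOf_eq_one, sub_self]
        exact hdvd.trans (Finset.dvd_prod_of_mem (fun k => 2 ^ k - 1)
          (Finset.mem_Icc.2 ⟨orderOf_two_pos hodd, hord⟩))
    _ ≤ Real.exp (∑ p ∈ P.primeFactors, (1 / p : ℝ)) :=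
        Real.prod_one_add_le_exp_sum _ fun p => by positivity
    _ ≤ Real.exp (5 + 4 * Real.log (2 * M)) := by
        have := sum_inv_primes_le P.primeFactors M
          (fun p hp => Nat.prime_of_mem_primeFactors hp) (card_primeFactors_prod_le M)
        apply Real.exp_le_exp.2
        linarith
    _ = Real.exp 5 * (2 * M) ^ 4 := by
        rw [Real.exp_add, show 4 * Real.log (2 * M) = ((4 : ℕ) : ℝ) * Real.log (2 * M) by norm_num,
          Real.exp_nat_mul, Real.exp_log hM0]

lemma summable_bound :
    Summable (fun j : ℕ => Real.exp 5 * (2 * ((j + 1 : ℕ) : ℝ)) ^ 4 / Real.sqrt (2 ^ j)) := by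
  have hr : ‖(1 / Real.sqrt 2 : ℝ)‖ < 1 := by
    rw [Real.norm_of_nonneg (by positivity), div_lt_one (by positivity)]
    exact Real.lt_sqrt_of_sq_lt (by norm_num)
  have h := summable_pow_mul_geometric_of_norm_lt_one 4 hr
  have h' := ((summable_nat_add_iff 1).2 h).mul_left (Real.exp 5 * 2 ^ 4 * Real.sqrt 2)
  refine h'.congr fun j => ?_
  have hs : Real.sqrt (2 ^ j) = Real.sqrt 2 ^ j := by
    rw [Real.sqrt_eq_iff_mul_self_eq (by positivity) (by positivity), ← mul_pow,
      Real.mul_self_sqrt (by norm_num)]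
  have h0 : Real.sqrt 2 ≠ 0 := by positivity
  rw [hs, one_div, inv_pow]
  field_simp
  ring

/-- The series `∑_{d odd} μ²(d) / (d·√(ord_d 2))` converges, where `ord_d 2` is the
multiplicative order of `2` modulo `d`. -/
theorem summable_moebius_sq_div_order_two :
    Summable (fun d : ℕ =>
      if Odd d then ((moebius d : ℝ)) ^ 2 / (d * Real.sqrt (orderOf (2 : ZMod d)))
      else 0) := by
  refine summable_of_sum_le (c := ∑' j : ℕ,
    Real.exp 5 * (2 * ((j + 1 : ℕ) : ℝ)) ^ 4 / Real.sqrt (2 ^ j)) ?_ ?_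
  · intro d
    dsimp only [Pi.zero_apply]
    split_ifs <;> positivity
  intro s
  set U := s.filter (fun d => Odd d ∧ Squarefree d) with hU
  set L : ℕ → ℕ := fun d => Nat.log 2 (orderOf (2 : ZMod d)) with hL
  calc _ ≤ ∑ d ∈ U, (1 / (d * Real.sqrt (orderOf (2 : ZMod d))) : ℝ) := by
        rw [hU, Finset.sum_filter]
        refine Finset.sum_le_sum fun d _ => ?_
        by_cases hodd : Odd d
        · by_cases hsq : Squarefree d
          · have : ((moebius d : ℝ)) ^ 2 = 1 := by
              exact_mod_cast moebius_sq_eq_one_of_squarefree hsq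
            rw [if_pos hodd, if_pos ⟨hodd, hsq⟩, this]
          · simp [hsq, moebius_eq_zero_of_not_squarefree hsq]
        · simp [hodd]
    _ = ∑ j ∈ U.image L, ∑ d ∈ U with L d = j,
          (1 / (d * Real.sqrt (orderOf (2 : ZMod d))) : ℝ) :=
        (Finset.sum_fiberwise_of_maps_to (fun d hd => Finset.mem_image_of_mem L hd) _).symm
    _ ≤ ∑ j ∈ U.image L, Real.exp 5 * (2 * ((j + 1 : ℕ) : ℝ)) ^ 4 / Real.sqrt (2 ^ j) := by
        refine Finset.sum_le_sum fun j _ => ?_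
        have hmem : ∀ d ∈ U.filter (fun d => L d = j), Odd d ∧ Squarefree d ∧ L d = j := by
          intro d hd
          simp only [hU, Finset.mem_filter] at hd
          exact ⟨hd.1.2.1, hd.1.2.2, hd.2⟩
        calc _ ≤ ∑ d ∈ U with L d = j, (1 / d : ℝ) / Real.sqrt (2 ^ j) := by
              refine Finset.sum_le_sum fun d hd => ?_
              obtain ⟨hodd, -, rfl⟩ := hmem d hd
              have h1 : (2 ^ L d : ℝ) ≤ orderOf (2 : ZMod d) := by
                exact_mod_cast Nat.pow_log_le_self 2 (orderOf_two_pos hodd).ne'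
              have hd0 : (0 : ℝ) < d := by exact_mod_cast hodd.pos
              rw [div_div]
              gcongr
          _ = (∑ d ∈ U with L d = j, (1 / d : ℝ)) / Real.sqrt (2 ^ j) := by
              rw [Finset.sum_div]
          _ ≤ _ := by
              gcongr
              refine sum_inv_order_le _ (j + 1) (by omega) fun d hd => ?_
              obtain ⟨hodd, hsq, rfl⟩ := hmem d hd
              exact ⟨hodd, hsq, (Nat.lt_pow_succ_log_self (by norm_num) _).le⟩
    _ ≤ _ := summable_bound.sum_le_tsum _ fun j _ => by positivity
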